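/- There exists a constant C > 0, depending only on α and β, such that for every real Dirichlet quasimode datum (u, λ, f) on the stadium S, one has ∫_S (∂_x u)² dA ≤ C ∫_{∂S ∩ W} w |∂_N u|² dl + C ‖f‖²_{L²(S)}. -/

import Mathlib

open MeasureTheory Real Set Filter

noncomputable section

/-- Partial derivative in the first (x) variable. -/
def pdx (u : ℝ × ℝ → ℝ) (p : ℝ × ℝ) : ℝ := deriv (fun t => u (t, p.2)) p.1

/-- Partial derivative in the second (y) variable. -/
def pdy (u : ℝ × ℝ → ℝ) (p : ℝ × ℝ) : ℝ := deriv (fun t => u (p.1, t)) p.2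

/-- The positive Laplacian `Δu = -u_xx - u_yy`. -/
def lap (u : ℝ × ℝ → ℝ) (p : ℝ × ℝ) : ℝ := -(pdx (pdx u) p) - (pdy (pdy u) p)

/-- The central rectangle `R = [-α,α] × [-β,β]`. -/
def Rect (α β : ℝ) : Set (ℝ × ℝ) := Icc (-α) α ×ˢ Icc (-β) β

/-- The wings `W = W₊ ∪ W₋`, two half-discs of radius β centered at `(±α, 0)`. -/
def Wings (α β : ℝ) : Set (ℝ × ℝ) :=
  {p | (p.1 - α) ^ 2 + p.2 ^ 2 ≤ β ^ 2 ∧ α ≤ p.1} ∪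
  {p | (p.1 + α) ^ 2 + p.2 ^ 2 ≤ β ^ 2 ∧ p.1 ≤ -α}

/-- The Bunimovich stadium `S = R ∪ W`. -/
def Stadium (α β : ℝ) : Set (ℝ × ℝ) := Rect α β ∪ Wings α β

/-- The boundary `∂S`: two horizontal segments and two semicircles. -/
def StadiumBoundary (α β : ℝ) : Set (ℝ × ℝ) :=
  {p | |p.1| ≤ α ∧ (p.2 = β ∨ p.2 = -β)} ∪
  {p | (|p.1| - α) ^ 2 + p.2 ^ 2 = β ^ 2 ∧ α ≤ |p.1|}

/-- Boundary integral `∫_{∂S} g dl` of an integrand `g` depending on the boundary point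
and the outward unit normal at that point. -/
def bdryInt (α β : ℝ) (g : ℝ × ℝ → ℝ × ℝ → ℝ) : ℝ :=
  (∫ x in (-α)..α, (g (x, β) (0, 1) + g (x, -β) (0, -1))) +
  β * ∫ θ in (-(π / 2))..(π / 2),
    (g (α + β * cos θ, β * sin θ) (cos θ, sin θ) +
     g (-(α + β * cos θ), β * sin θ) (-cos θ, sin θ))

/-- Boundary integral `∫_{∂S ∩ W} g dl` over the two semicircles only. -/
def bdryIntW (α β : ℝ) (g : ℝ × ℝ → ℝ × ℝ → ℝ) : ℝ :=
  β * ∫ θ in (-(π / 2))..(π / 2),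
    (g (α + β * cos θ, β * sin θ) (cos θ, sin θ) +
     g (-(α + β * cos θ), β * sin θ) (-cos θ, sin θ))

/-- The normal derivative `∂_N u = n₁ ∂_x u + n₂ ∂_y u` at a boundary point `p`
with outward unit normal `n`. -/
def nderiv (u : ℝ × ℝ → ℝ) (p n : ℝ × ℝ) : ℝ := n.1 * pdx u p + n.2 * pdy u p

/-- A real Dirichlet quasimode datum `(u, λ, f)` on the stadium: `λ > 0`, `u` smooth on a
neighborhood of `S`, `u = 0` on `∂S`, and `(Δ - λ²) u = f` on `S`. -/
structure QMDatum (α β : ℝ) where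
  u : ℝ × ℝ → ℝ
  lam : ℝ
  f : ℝ × ℝ → ℝ
  lam_pos : 0 < lam
  smooth : ∃ V : Set (ℝ × ℝ), IsOpen V ∧ Stadium α β ⊆ V ∧ ContDiffOn ℝ (⊤ : ℕ∞) u V
  dirichlet : ∀ p ∈ StadiumBoundary α β, u p = 0
  eqn : ∀ p ∈ Stadium α β, lap u p - lam ^ 2 * u p = f p

/-!
Pair `(Δ - μ) u` with the multiplier `2 x ∂ₓu + u`. The product is `2 (∂ₓu)²` minus the divergence
of a vector field quadratic in `(u, ∇u)`. Since `u` vanishes on `∂S`, its gradient there is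
`(∂_N u) N`, so the outward flux of this field is `x N₁ (∂_N u)²`: it is zero on the flat sides,
and on the wings it is at most `(α + β) / β` times `w (∂_N u)²`, because `β |N₁| = w` and
`|x| ≤ α + β`. The terms left over from pairing the source with the multiplier are absorbed into
`∫ (∂ₓu)²` by Young's inequality and the Poincaré inequality obtained from the divergence of
`(x u², 0)`.
-/

open scoped Topology

section Extension

variable {E F : Type*} [NormedAddCommGroup E] [NormedSpace ℝ E] [FiniteDimensional ℝ E]
  [NormedAddCommGroup F] [NormedSpace ℝ F]

theorem exists_contDiff_eventuallyEq_nhdsSet {n : ℕ∞} {s V : Set E} {f : E → F}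
    (hs : IsClosed s) (hV : IsOpen V) (hsV : s ⊆ V) (hf : ContDiffOn ℝ n f V) :
    ∃ g : E → F, ContDiff ℝ n g ∧ f =ᶠ[𝓝ˢ s] g := by
  obtain ⟨χ, hχ_zero, hχ_one, -⟩ := exists_contMDiffMap_zero_one_nhds_of_isClosed (n := n)
    (modelWithCornersSelf ℝ E) hV.isClosed_compl hs (disjoint_compl_left_iff_subset.2 hsV)
  have hχ : ContDiff ℝ n χ := χ.contMDiff.contDiff
  refine ⟨fun x => χ x • f x, contDiff_iff_contDiffAt.2 fun x => ?_, ?_⟩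
  · by_cases hx : x ∈ V
    · exact hχ.contDiffAt.smul (hf.contDiffAt (hV.mem_nhds hx))
    · refine (contDiffAt_const (c := (0 : F))).congr_of_eventuallyEq ?_
      filter_upwards [eventually_nhdsSet_iff_forall.1 hχ_zero x hx] with y hy
      rw [hy, zero_smul]
  · filter_upwards [hχ_one] with x hx
    rw [hx, one_smul]

end Extension

section PartialDerivatives

variable {u v : ℝ × ℝ → ℝ} {p : ℝ × ℝ} {s : Set (ℝ × ℝ)} {m n : WithTop ℕ∞}

theorem hasDerivAt_pdx (hv : DifferentiableAt ℝ v p) :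
    HasDerivAt (fun t => v (t, p.2)) (pdx v p) p.1 :=
  (hv.comp p.1 (f := fun t => (t, p.2)) (by fun_prop)).hasDerivAt

theorem hasDerivAt_pdy (hv : DifferentiableAt ℝ v p) :
    HasDerivAt (fun t => v (p.1, t)) (pdy v p) p.2 :=
  (hv.comp p.2 (f := fun t => (p.1, t)) (by fun_prop)).hasDerivAt

theorem pdx_eq_fderiv (hv : DifferentiableAt ℝ v p) : pdx v p = fderiv ℝ v p (1, 0) :=
  (hv.hasFDerivAt.comp_hasDerivAt p.1
    ((hasDerivAt_id p.1).prodMk (hasDerivAt_const p.1 p.2))).deriv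

theorem pdy_eq_fderiv (hv : DifferentiableAt ℝ v p) : pdy v p = fderiv ℝ v p (0, 1) :=
  (hv.hasFDerivAt.comp_hasDerivAt p.2
    ((hasDerivAt_const p.2 p.1).prodMk (hasDerivAt_id p.2))).deriv

theorem fderiv_apply_eq_pdx_add_pdy (hv : DifferentiableAt ℝ v p) (w : ℝ × ℝ) :
    fderiv ℝ v p w = w.1 * pdx v p + w.2 * pdy v p := by
  have hw : w = w.1 • ((1 : ℝ), (0 : ℝ)) + w.2 • ((0 : ℝ), (1 : ℝ)) := by ext <;> simp
  rw [pdx_eq_fderiv hv, pdy_eq_fderiv hv]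
  conv_lhs => rw [hw, map_add, map_smul, map_smul, smul_eq_mul, smul_eq_mul]

theorem contDiff_pdx (hv : ContDiff ℝ n v) (hmn : m + 1 ≤ n) : ContDiff ℝ m (pdx v) := by
  have hd : Differentiable ℝ v := hv.differentiable (by rintro rfl; simp at hmn)
  rw [show pdx v = fun p => fderiv ℝ v p (1, 0) from funext fun p => pdx_eq_fderiv (hd p)]
  exact (hv.fderiv_right hmn).clm_apply contDiff_const

theorem contDiff_pdy (hv : ContDiff ℝ n v) (hmn : m + 1 ≤ n) : ContDiff ℝ m (pdy v) := by
  have hd : Differentiable ℝ v := hv.differentiable (by rintro rfl; simp at hmn)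
  rw [show pdy v = fun p => fderiv ℝ v p (0, 1) from funext fun p => pdy_eq_fderiv (hd p)]
  exact (hv.fderiv_right hmn).clm_apply contDiff_const

theorem continuous_lap (hv : ContDiff ℝ 2 v) : Continuous (lap v) := by
  have hxx := contDiff_pdx (m := 0) (contDiff_pdx (m := 1) hv one_add_one_eq_two.le) (by simp)
  have hyy := contDiff_pdy (m := 0) (contDiff_pdy (m := 1) hv one_add_one_eq_two.le) (by simp)
  exact hxx.continuous.neg.sub hyy.continuous

theorem pdx_pdy_comm (hv : ContDiff ℝ 2 v) (p : ℝ × ℝ) : pdx (pdy v) p = pdy (pdx v) p := by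
  have hv₁ : Differentiable ℝ v := hv.differentiable (by simp)
  have hv₂ : Differentiable ℝ (fderiv ℝ v) :=
    (hv.fderiv_right (m := 1) one_add_one_eq_two.le).differentiable (by simp)
  have hsymm : IsSymmSndFDerivAt ℝ v p := hv.contDiffAt.isSymmSndFDerivAt (by simp)
  have hfderiv (w : ℝ × ℝ) :
      fderiv ℝ (fun q => fderiv ℝ v q w) p = (fderiv ℝ (fderiv ℝ v) p).flip w := by
    rw [fderiv_clm_apply (hv₂ p) (by fun_prop)]
    simp
  have hx : pdx v = fun q => fderiv ℝ v q (1, 0) := funext fun q => pdx_eq_fderiv (hv₁ q)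
  have hy : pdy v = fun q => fderiv ℝ v q (0, 1) := funext fun q => pdy_eq_fderiv (hv₁ q)
  rw [hx, hy, pdx_eq_fderiv (by fun_prop), pdy_eq_fderiv (by fun_prop), hfderiv, hfderiv]
  exact hsymm.eq _ _

theorem pdx_eventuallyEq (h : u =ᶠ[𝓝ˢ s] v) : pdx u =ᶠ[𝓝ˢ s] pdx v := by
  obtain ⟨t, ht, hst, huv⟩ := eventually_nhdsSet_iff_exists.1 h
  refine eventually_nhdsSet_iff_exists.2 ⟨t, ht, hst, fun p hp => EventuallyEq.deriv_eq ?_⟩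
  have hcont : ContinuousAt (fun x : ℝ => (x, p.2)) p.1 := by fun_prop
  exact (hcont.eventually (ht.mem_nhds hp)).mono fun x hx => huv _ hx

theorem pdy_eventuallyEq (h : u =ᶠ[𝓝ˢ s] v) : pdy u =ᶠ[𝓝ˢ s] pdy v := by
  obtain ⟨t, ht, hst, huv⟩ := eventually_nhdsSet_iff_exists.1 h
  refine eventually_nhdsSet_iff_exists.2 ⟨t, ht, hst, fun p hp => EventuallyEq.deriv_eq ?_⟩
  have hcont : ContinuousAt (fun y : ℝ => (p.1, y)) p.2 := by fun_prop
  exact (hcont.eventually (ht.mem_nhds hp)).mono fun y hy => huv _ hy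

theorem lap_eventuallyEq (h : u =ᶠ[𝓝ˢ s] v) : lap u =ᶠ[𝓝ˢ s] lap v :=
  (pdx_eventuallyEq (pdx_eventuallyEq h)).fun_neg.fun_sub (pdy_eventuallyEq (pdy_eventuallyEq h))

end PartialDerivatives

section ClosedRegionBetween

/-- The closed region between the graphs of `f` and `g` over `s`: the domain of integration
described by its vertical slices. Mathlib's `regionBetween` omits the two graphs. -/
def closedRegionBetween {X : Type*} (f g : X → ℝ) (s : Set X) : Set (X × ℝ) :=
  {p | p.1 ∈ s ∧ p.2 ∈ Icc (f p.1) (g p.1)}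

theorem isCompact_closedRegionBetween {X : Type*} [TopologicalSpace X] [T2Space X]
    {f g : X → ℝ} {s : Set X} (hf : Continuous f) (hg : Continuous g) (hs : IsCompact s) :
    IsCompact (closedRegionBetween f g s) := by
  obtain ⟨a, ha⟩ := hs.bddBelow_image hf.continuousOn
  obtain ⟨b, hb⟩ := hs.bddAbove_image hg.continuousOn
  have hclosed : IsClosed (closedRegionBetween f g s) :=
    (hs.isClosed.preimage continuous_fst).inter
      ((isClosed_le (by fun_prop) continuous_snd).inter (isClosed_le continuous_snd (by fun_prop)))
  have hbox : IsCompact (s ×ˢ Icc a b) := hs.prod isCompact_Icc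
  refine hbox.of_isClosed_subset hclosed fun p hp => ⟨hp.1, ?_, ?_⟩
  · exact (ha (mem_image_of_mem f hp.1)).trans hp.2.1
  · exact hp.2.2.trans (hb (mem_image_of_mem g hp.1))

theorem setIntegral_closedRegionBetween {X E : Type*} [MeasurableSpace X] {ν : Measure X}
    [SFinite ν] [NormedAddCommGroup E] [NormedSpace ℝ E] {f g : X → ℝ} {s : Set X}
    {G : X × ℝ → E} (hs : MeasurableSet s) (hm : MeasurableSet (closedRegionBetween f g s))
    (hG : IntegrableOn G (closedRegionBetween f g s) (ν.prod volume)) :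
    ∫ p in closedRegionBetween f g s, G p ∂(ν.prod volume)
      = ∫ x in s, (∫ y in Icc (f x) (g x), G (x, y)) ∂ν := by
  rw [← integral_indicator hm, integral_prod _ (hG.integrable_indicator hm),
    ← integral_indicator hs]
  congr with x
  by_cases hx : x ∈ s
  · rw [indicator_of_mem hx, ← integral_indicator measurableSet_Icc]
    congr with y
    exact indicator_eq_indicator (by simp [closedRegionBetween, hx]) rfl
  · simp [closedRegionBetween, hx]

variable {a b : ℝ} {f g : ℝ → ℝ} {P Q : ℝ × ℝ → ℝ}

theorem setIntegral_pdy_closedRegionBetween (hab : a ≤ b) (hf : Continuous f)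
    (hg : Continuous g) (hfg : ∀ x ∈ Icc a b, f x ≤ g x) (hQ : ContDiff ℝ 1 Q) :
    ∫ p in closedRegionBetween f g (Icc a b), pdy Q p
      = ∫ x in a..b, (Q (x, g x) - Q (x, f x)) := by
  have hcompact := isCompact_closedRegionBetween hf hg (isCompact_Icc (a := a) (b := b))
  have hcont : Continuous (pdy Q) := (contDiff_pdy (m := 0) hQ (by simp)).continuous
  rw [Measure.volume_eq_prod, setIntegral_closedRegionBetween measurableSet_Icc
    hcompact.measurableSet (hcont.continuousOn.integrableOn_compact hcompact),
    intervalIntegral.integral_of_le hab, ← integral_Icc_eq_integral_Ioc]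
  refine setIntegral_congr_fun measurableSet_Icc fun x hx => ?_
  rw [integral_Icc_eq_integral_Ioc, ← intervalIntegral.integral_of_le (hfg x hx)]
  refine intervalIntegral.integral_eq_sub_of_hasDerivAt (f := fun y => Q (x, y))
    (fun y _ => hasDerivAt_pdy (hQ.differentiable (by simp) (x, y))) ?_
  exact Continuous.intervalIntegrable (by fun_prop) _ _

theorem setIntegral_pdx_swap_closedRegionBetween (hab : a ≤ b) (hf : Continuous f)
    (hg : Continuous g) (hfg : ∀ y ∈ Icc a b, f y ≤ g y) (hP : ContDiff ℝ 1 P) :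
    ∫ p in Prod.swap ⁻¹' closedRegionBetween f g (Icc a b), pdx P p
      = ∫ y in a..b, (P (g y, y) - P (f y, y)) :=
  (Measure.measurePreserving_swap.setIntegral_preimage_emb
    MeasurableEquiv.prodComm.measurableEmbedding (pdy (P ∘ Prod.swap)) _).trans
    (setIntegral_pdy_closedRegionBetween hab hf hg hfg
      (hP.comp (contDiff_snd.prodMk contDiff_fst)))

end ClosedRegionBetween

section StadiumGeometry

variable {α β : ℝ} {p : ℝ × ℝ}

/-- Half the length of the horizontal slice of the stadium at height `y`. -/
def halfWidth (α β y : ℝ) : ℝ := α + √(β ^ 2 - y ^ 2)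

/-- Half the length of the vertical slice of the stadium over the abscissa `x`. -/
def halfHeight (α β x : ℝ) : ℝ := √(β ^ 2 - max (|x| - α) 0 ^ 2)

-- The stadium is the closed `β`-neighbourhood of the segment `[-α, α] × {0}`.
theorem mem_stadium_iff (hα : 0 ≤ α) (hβ : 0 ≤ β) :
    p ∈ Stadium α β ↔ max (|p.1| - α) 0 ^ 2 + p.2 ^ 2 ≤ β ^ 2 := by
  obtain ⟨x, y⟩ := p
  have hy_iff : |y| ≤ β ↔ y ^ 2 ≤ β ^ 2 := by rw [sq_le_sq, abs_of_nonneg hβ]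
  simp only [Stadium, Rect, Wings, mem_union, mem_prod, mem_Icc, mem_ofPred_eq]
  rw [← abs_le, ← abs_le, hy_iff]
  rcases le_or_gt |x| α with hx | hx
  · rw [max_eq_right (by linarith), zero_pow two_ne_zero, zero_add]
    refine ⟨?_, fun hy => Or.inl ⟨hx, hy⟩⟩
    rintro (⟨-, hy⟩ | ⟨hdisc, -⟩ | ⟨hdisc, -⟩)
    · exact hy
    · linarith [sq_nonneg (x - α)]
    · linarith [sq_nonneg (x + α)]
  · rw [max_eq_left (by linarith)]
    rcases le_total 0 x with hx₀ | hx₀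
    · rw [abs_of_nonneg hx₀] at hx ⊢
      refine ⟨?_, fun hdisc => Or.inr (Or.inl ⟨hdisc, hx.le⟩)⟩
      rintro (⟨hx', -⟩ | ⟨hdisc, -⟩ | ⟨-, hx'⟩) <;> linarith
    · rw [abs_of_nonpos hx₀] at hx ⊢
      have hsq : (-x - α) ^ 2 = (x + α) ^ 2 := by ring
      rw [hsq]
      refine ⟨?_, fun hdisc => Or.inr (Or.inr ⟨hdisc, by linarith⟩)⟩
      rintro (⟨hx', -⟩ | ⟨-, hx'⟩ | ⟨hdisc, -⟩) <;> linarith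

theorem abs_fst_le_of_mem_stadium (hα : 0 ≤ α) (hβ : 0 ≤ β) (hp : p ∈ Stadium α β) :
    |p.1| ≤ α + β := by
  have hsq : max (|p.1| - α) 0 ^ 2 ≤ β ^ 2 := by
    linarith [(mem_stadium_iff hα hβ).1 hp, sq_nonneg p.2]
  linarith [le_max_left (|p.1| - α) 0, (sq_le_sq₀ (le_max_right _ _) hβ).1 hsq]

theorem stadiumBoundary_subset_stadium (hα : 0 ≤ α) (hβ : 0 ≤ β) :
    StadiumBoundary α β ⊆ Stadium α β := by
  intro p hp
  rw [mem_stadium_iff hα hβ]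
  rcases hp with ⟨hx, hy⟩ | ⟨hcircle, hx⟩
  · rw [max_eq_right (by linarith)]
    rcases hy with hy | hy <;> simp [hy]
  · rw [max_eq_left (by linarith)]
    exact hcircle.le

theorem stadium_eq_closedRegionBetween (hα : 0 ≤ α) (hβ : 0 ≤ β) :
    Stadium α β = closedRegionBetween (fun x => -halfHeight α β x) (halfHeight α β)
      (Icc (-(α + β)) (α + β)) := by
  ext p
  simp only [closedRegionBetween, mem_ofPred_eq, mem_Icc, ← abs_le]
  refine ⟨fun hp => ⟨abs_fst_le_of_mem_stadium hα hβ hp, Real.abs_le_sqrt ?_⟩, ?_⟩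
  · linarith [(mem_stadium_iff hα hβ).1 hp]
  · rintro ⟨hx, hy⟩
    have hmax : max (|p.1| - α) 0 ^ 2 ≤ β ^ 2 := by
      gcongr
      exact max_le (by linarith) hβ
    rw [halfHeight, Real.le_sqrt (abs_nonneg _) (by linarith), sq_abs] at hy
    rw [mem_stadium_iff hα hβ]
    linarith

theorem stadium_eq_swap_preimage_closedRegionBetween (hα : 0 ≤ α) (hβ : 0 ≤ β) :
    Stadium α β = Prod.swap ⁻¹'
      closedRegionBetween (fun y => -halfWidth α β y) (halfWidth α β) (Icc (-β) β) := by
  ext p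
  simp only [closedRegionBetween, mem_preimage, mem_ofPred_eq, mem_Icc, ← abs_le,
    Prod.fst_swap, Prod.snd_swap]
  rw [mem_stadium_iff hα hβ, halfWidth, ← sub_le_iff_le_add']
  constructor
  · intro hp
    exact ⟨abs_le_of_sq_le_sq (by linarith [sq_nonneg (max (|p.1| - α) 0)]) hβ,
      (le_max_left _ 0).trans (Real.le_sqrt_of_sq_le (by linarith))⟩
  · rintro ⟨hy, hx⟩
    have hsq : p.2 ^ 2 ≤ β ^ 2 := sq_le_sq' (abs_le.1 hy).1 (abs_le.1 hy).2
    have hmax := max_le hx (Real.sqrt_nonneg (β ^ 2 - p.2 ^ 2))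
    rw [Real.le_sqrt (le_max_right _ _) (by linarith)] at hmax
    linarith

theorem continuous_halfWidth : Continuous (halfWidth α β) := by unfold halfWidth; fun_prop

theorem continuous_halfHeight : Continuous (halfHeight α β) := by unfold halfHeight; fun_prop

theorem isCompact_stadium (hα : 0 ≤ α) (hβ : 0 ≤ β) : IsCompact (Stadium α β) := by
  rw [stadium_eq_closedRegionBetween hα hβ]
  exact isCompact_closedRegionBetween continuous_halfHeight.neg continuous_halfHeight isCompact_Icc

theorem halfWidth_mul_sin {θ : ℝ} (hβ : 0 ≤ β) (hθ : 0 ≤ cos θ) :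
    halfWidth α β (β * sin θ) = α + β * cos θ := by
  have hsq : β ^ 2 - (β * sin θ) ^ 2 = (β * cos θ) ^ 2 := by
    linear_combination -β ^ 2 * sin_sq_add_cos_sq θ
  rw [halfWidth, hsq, Real.sqrt_sq (by positivity)]

theorem halfHeight_neg (x : ℝ) : halfHeight α β (-x) = halfHeight α β x := by
  rw [halfHeight, halfHeight, abs_neg]

theorem halfHeight_of_abs_le {x : ℝ} (hβ : 0 ≤ β) (hx : |x| ≤ α) : halfHeight α β x = β := by
  rw [halfHeight, max_eq_right (by linarith), zero_pow two_ne_zero, sub_zero, Real.sqrt_sq hβ]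

theorem halfHeight_add_mul_cos {θ : ℝ} (hα : 0 ≤ α) (hβ : 0 ≤ β) (hcos : 0 ≤ cos θ)
    (hsin : 0 ≤ sin θ) : halfHeight α β (α + β * cos θ) = β * sin θ := by
  have hsq : β ^ 2 - (β * cos θ) ^ 2 = (β * sin θ) ^ 2 := by
    linear_combination -β ^ 2 * sin_sq_add_cos_sq θ
  rw [halfHeight, abs_of_nonneg (by positivity), add_sub_cancel_left,
    max_eq_left (by positivity), hsq, Real.sqrt_sq (by positivity)]

end StadiumGeometry

section OutwardNormal

variable {α β : ℝ} {p n : ℝ × ℝ}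

/-- `IsWingNormal α β p n` says that `p` lies on one of the two open semicircles of the stadium
boundary and that `n` is the outward unit normal there. -/
inductive IsWingNormal (α β : ℝ) : ℝ × ℝ → ℝ × ℝ → Prop
  | right {θ : ℝ} (hθ : θ ∈ Ioo (-(π / 2)) (π / 2)) :
    IsWingNormal α β (α + β * cos θ, β * sin θ) (cos θ, sin θ)
  | left {θ : ℝ} (hθ : θ ∈ Ioo (-(π / 2)) (π / 2)) :
    IsWingNormal α β (-(α + β * cos θ), β * sin θ) (-cos θ, sin θ)

/-- `IsOutwardNormal α β p n` says that `p` lies on the stadium boundary and that `n` is the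
outward unit normal there; the four points where segments and semicircles meet are left out. -/
inductive IsOutwardNormal (α β : ℝ) : ℝ × ℝ → ℝ × ℝ → Prop
  | top {x : ℝ} (hx : x ∈ Ioo (-α) α) : IsOutwardNormal α β (x, β) (0, 1)
  | bottom {x : ℝ} (hx : x ∈ Ioo (-α) α) : IsOutwardNormal α β (x, -β) (0, -1)
  | wing {p n : ℝ × ℝ} (h : IsWingNormal α β p n) : IsOutwardNormal α β p n

theorem IsWingNormal.abs_fst (hα : 0 ≤ α) (hβ : 0 ≤ β) (h : IsWingNormal α β p n) :
    |p.1| = α + β * |n.1| := by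
  obtain hθ | hθ := h <;> have hcos := cos_pos_of_mem_Ioo hθ
  · rw [abs_of_pos hcos, abs_of_nonneg (by positivity)]
  · rw [abs_neg, abs_neg, abs_of_pos hcos, abs_of_nonneg (by positivity)]

theorem IsOutwardNormal.sq_add_sq (h : IsOutwardNormal α β p n) : n.1 ^ 2 + n.2 ^ 2 = 1 := by
  obtain _ | _ | (_ | _) := h <;> simp

theorem IsWingNormal.le_abs_fst (hα : 0 ≤ α) (hβ : 0 ≤ β) (h : IsWingNormal α β p n) :
    α ≤ |p.1| := by
  rw [h.abs_fst hα hβ]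
  exact le_add_of_nonneg_right (by positivity)

theorem IsWingNormal.fst_mul_fst_le (hα : 0 ≤ α) (hβ : 0 < β) (h : IsWingNormal α β p n) :
    p.1 * n.1 ≤ (α + β) / β * (|p.1| - α) := by
  have hn : |n.1| ≤ 1 := by
    rw [← sq_le_one_iff_abs_le_one]
    linarith [(IsOutwardNormal.wing h).sq_add_sq, sq_nonneg n.2]
  calc p.1 * n.1 ≤ |p.1| * |n.1| := (le_abs_self _).trans (abs_mul _ _).le
    _ = (α + β * |n.1|) * |n.1| := by rw [h.abs_fst hα hβ.le]
    _ ≤ (α + β * 1) * |n.1| := by gcongr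
    _ = (α + β) / β * (|p.1| - α) := by rw [h.abs_fst hα hβ.le]; field_simp; ring

theorem IsOutwardNormal.mem_stadiumBoundary (hα : 0 ≤ α) (hβ : 0 ≤ β)
    (h : IsOutwardNormal α β p n) : p ∈ StadiumBoundary α β := by
  obtain hx | hx | h := h
  · exact Or.inl ⟨abs_le.2 (Ioo_subset_Icc_self hx), Or.inl rfl⟩
  · exact Or.inl ⟨abs_le.2 (Ioo_subset_Icc_self hx), Or.inr rfl⟩
  · have hβn : |p.1| - α = β * |n.1| := by rw [h.abs_fst hα hβ, add_sub_cancel_left]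
    have hp₂ : p.2 = β * n.2 := by obtain _ | _ := h <;> rfl
    refine Or.inr ⟨?_, h.le_abs_fst hα hβ⟩
    rw [hβn, hp₂, mul_pow, mul_pow, sq_abs, ← mul_add, (IsOutwardNormal.wing h).sq_add_sq, mul_one]

theorem IsOutwardNormal.exists_boundary_curve (hα : 0 ≤ α) (hβ : 0 < β)
    (h : IsOutwardNormal α β p n) :
    ∃ (γ : ℝ → ℝ × ℝ) (t c : ℝ), c ≠ 0 ∧ γ t = p ∧ HasDerivAt γ (c * -n.2, c * n.1) t ∧
      ∀ᶠ s in 𝓝 t, γ s ∈ StadiumBoundary α β := by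
  have hsegment (b x : ℝ) : HasDerivAt (fun s : ℝ => (s, b)) ((1 : ℝ), (0 : ℝ)) x :=
    (hasDerivAt_id x).prodMk (hasDerivAt_const x b)
  have hx_arc (θ : ℝ) : HasDerivAt (fun s => α + β * cos s) (β * -sin θ) θ :=
    ((hasDerivAt_cos θ).const_mul β).const_add α
  have hy_arc (θ : ℝ) : HasDerivAt (fun s => β * sin s) (β * cos θ) θ :=
    (hasDerivAt_sin θ).const_mul β
  obtain hx | hx | (hθ | hθ) := h
  · refine ⟨fun s => (s, β), _, -1, by simp, rfl, by simpa using hsegment β _, ?_⟩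
    exact (isOpen_Ioo.eventually_mem hx).mono fun s hs => (top hs).mem_stadiumBoundary hα hβ.le
  · refine ⟨fun s => (s, -β), _, 1, by simp, rfl, by simpa using hsegment (-β) _, ?_⟩
    exact (isOpen_Ioo.eventually_mem hx).mono fun s hs => (bottom hs).mem_stadiumBoundary hα hβ.le
  · refine ⟨fun s => (α + β * cos s, β * sin s), _, β, hβ.ne', rfl,
      (hx_arc _).prodMk (hy_arc _), ?_⟩
    exact (isOpen_Ioo.eventually_mem hθ).mono fun s hs =>
      (wing (.right hs)).mem_stadiumBoundary hα hβ.le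
  · refine ⟨fun s => (-(α + β * cos s), β * sin s), _, -β, neg_ne_zero.2 hβ.ne', rfl,
      by simpa using (hx_arc _).fun_neg.prodMk (hy_arc _), ?_⟩
    exact (isOpen_Ioo.eventually_mem hθ).mono fun s hs =>
      (wing (.left hs)).mem_stadiumBoundary hα hβ.le

theorem IsOutwardNormal.gradient_eq_nderiv_mul {v : ℝ × ℝ → ℝ} (hα : 0 ≤ α) (hβ : 0 < β)
    (h : IsOutwardNormal α β p n) (hv : DifferentiableAt ℝ v p)
    (hv₀ : ∀ q ∈ StadiumBoundary α β, v q = 0) :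
    pdx v p = nderiv v p n * n.1 ∧ pdy v p = nderiv v p n * n.2 := by
  obtain ⟨γ, t, c, hc, rfl, hγ, hmem⟩ := h.exists_boundary_curve hα hβ
  have hcomp : HasDerivAt (v ∘ γ) (fderiv ℝ v (γ t) (c * -n.2, c * n.1)) t :=
    hv.hasFDerivAt.comp_hasDerivAt t hγ
  have hconst : HasDerivAt (v ∘ γ) 0 t :=
    (hasDerivAt_const t (0 : ℝ)).congr_of_eventuallyEq (hmem.mono fun s hs => hv₀ _ hs)
  have htangential : c * (n.1 * pdy v (γ t) - n.2 * pdx v (γ t)) = 0 := by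
    rw [← hcomp.unique hconst, fderiv_apply_eq_pdx_add_pdy hv]
    ring
  have hunit := h.sq_add_sq
  have htan := (mul_eq_zero.1 htangential).resolve_left hc
  constructor
  · rw [nderiv]; linear_combination -pdx v (γ t) * hunit - n.2 * htan
  · rw [nderiv]; linear_combination -pdy v (γ t) * hunit + n.1 * htan

end OutwardNormal

section BoundaryIntegral

variable {α β : ℝ} {g g' : ℝ × ℝ → ℝ × ℝ → ℝ}

theorem bdryInt_eq_add_bdryIntW (g : ℝ × ℝ → ℝ × ℝ → ℝ) :
    bdryInt α β g
      = (∫ x in (-α)..α, (g (x, β) (0, 1) + g (x, -β) (0, -1))) + bdryIntW α β g :=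
  rfl

theorem bdryIntW_congr (h : ∀ p n, IsWingNormal α β p n → g p n = g' p n) :
    bdryIntW α β g = bdryIntW α β g' := by
  unfold bdryIntW
  congr 1
  refine intervalIntegral.integral_congr_Ioo_of_le (neg_le_self (by positivity)) fun θ hθ => ?_
  simp only [h _ _ (.right hθ), h _ _ (.left hθ)]

theorem bdryInt_congr (hα : 0 ≤ α) (h : ∀ p n, IsOutwardNormal α β p n → g p n = g' p n) :
    bdryInt α β g = bdryInt α β g' := by
  rw [bdryInt_eq_add_bdryIntW, bdryInt_eq_add_bdryIntW,
    bdryIntW_congr fun p n hpn => h p n (.wing hpn)]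
  congr 1
  refine intervalIntegral.integral_congr_Ioo_of_le (neg_le_self hα) fun x hx => ?_
  simp only [h _ _ (.top hx), h _ _ (.bottom hx)]

theorem intervalIntegrable_segments (hg : Continuous (Function.uncurry g)) (a b : ℝ) :
    IntervalIntegrable (fun x => g (x, β) (0, 1) + g (x, -β) (0, -1)) volume a b :=
  Continuous.intervalIntegrable (by fun_prop) a b

theorem intervalIntegrable_arcs (hg : Continuous (Function.uncurry g)) (a b : ℝ) :
    IntervalIntegrable (fun θ => g (α + β * cos θ, β * sin θ) (cos θ, sin θ) +
      g (-(α + β * cos θ), β * sin θ) (-cos θ, sin θ)) volume a b :=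
  Continuous.intervalIntegrable (by fun_prop) a b

theorem bdryIntW_mono (hβ : 0 ≤ β) (hg : Continuous (Function.uncurry g))
    (hg' : Continuous (Function.uncurry g'))
    (h : ∀ p n, IsWingNormal α β p n → g p n ≤ g' p n) : bdryIntW α β g ≤ bdryIntW α β g' := by
  refine mul_le_mul_of_nonneg_left ?_ hβ
  exact intervalIntegral.integral_mono_on_of_le_Ioo (neg_le_self (by positivity))
    (intervalIntegrable_arcs hg _ _) (intervalIntegrable_arcs hg' _ _)
    fun θ hθ => add_le_add (h _ _ (.right hθ)) (h _ _ (.left hθ))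

theorem bdryIntW_const_mul (c : ℝ) (g : ℝ × ℝ → ℝ × ℝ → ℝ) :
    bdryIntW α β (fun p n => c * g p n) = c * bdryIntW α β g := by
  simp only [bdryIntW, ← mul_add, intervalIntegral.integral_const_mul]
  ring

theorem bdryIntW_nonneg (hβ : 0 ≤ β) (h : ∀ p n, IsWingNormal α β p n → 0 ≤ g p n) :
    0 ≤ bdryIntW α β g := by
  refine mul_nonneg hβ ?_
  rw [intervalIntegral.integral_of_le (neg_le_self (by positivity)), integral_Ioc_eq_integral_Ioo]
  exact setIntegral_nonneg measurableSet_Ioo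
    fun θ hθ => add_nonneg (h _ _ (.right hθ)) (h _ _ (.left hθ))

theorem bdryInt_add (hg : Continuous (Function.uncurry g))
    (hg' : Continuous (Function.uncurry g')) :
    bdryInt α β (fun p n => g p n + g' p n) = bdryInt α β g + bdryInt α β g' := by
  simp only [bdryInt, add_add_add_comm (g _ _) (g' _ _) (g _ _) (g' _ _)]
  rw [intervalIntegral.integral_add (intervalIntegrable_segments hg _ _)
      (intervalIntegrable_segments hg' _ _),
    intervalIntegral.integral_add (intervalIntegrable_arcs hg _ _)
      (intervalIntegrable_arcs hg' _ _)]
  ring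

end BoundaryIntegral

section DivergenceTheorem

variable {α β : ℝ} {P Q : ℝ × ℝ → ℝ}

theorem integral_neg_self_eq_integral_add_comp_neg {a : ℝ} {F : ℝ → ℝ} (hF : Continuous F) :
    ∫ x in (-a)..a, F x = ∫ x in 0..a, (F x + F (-x)) := by
  have hneg : ∫ x in 0..a, F (-x) = ∫ x in (-a)..0, F x := by
    rw [intervalIntegral.integral_comp_neg, neg_zero]
  have hF' : Continuous fun x => F (-x) := by fun_prop
  rw [intervalIntegral.integral_add (hF.intervalIntegrable _ _)
      (hF'.intervalIntegrable _ _), hneg, add_comm,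
    intervalIntegral.integral_add_adjacent_intervals (hF.intervalIntegrable _ _)
      (hF.intervalIntegrable _ _)]

theorem integral_stadium_base {g : ℝ → ℝ} (hg : Continuous g) :
    ∫ x in (-(α + β))..(α + β), g x = (∫ x in (-α)..α, g x) +
      ∫ θ in 0..(π / 2), (g (α + β * cos θ) + g (-(α + β * cos θ))) * (β * sin θ) := by
  have hsymm : Continuous fun x => g x + g (-x) := by fun_prop
  have hcov := intervalIntegral.integral_comp_mul_deriv (a := 0) (b := π / 2)
    (fun θ _ => ((hasDerivAt_cos θ).const_mul β).const_add α) (by fun_prop) hsymm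
  simp only [cos_zero, cos_pi_div_two, mul_one, mul_zero, add_zero] at hcov
  have harc : ∫ x in α..(α + β), (g x + g (-x)) =
      ∫ θ in 0..(π / 2), (g (α + β * cos θ) + g (-(α + β * cos θ))) * (β * sin θ) := by
    rw [intervalIntegral.integral_symm, ← hcov, ← intervalIntegral.integral_neg]
    congr with θ
    simp only [Function.comp_apply]
    ring
  rw [integral_neg_self_eq_integral_add_comp_neg hg, integral_neg_self_eq_integral_add_comp_neg hg,
    ← harc, intervalIntegral.integral_add_adjacent_intervals (hsymm.intervalIntegrable _ _)
      (hsymm.intervalIntegrable _ _)]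

theorem setIntegral_pdx_stadium (hα : 0 ≤ α) (hβ : 0 ≤ β) (hP : ContDiff ℝ 1 P) :
    ∫ p in Stadium α β, pdx P p = bdryInt α β (fun p n => n.1 * P p) := by
  have hPc := hP.continuous
  have hw := continuous_halfWidth (α := α) (β := β)
  have hcov := intervalIntegral.integral_comp_mul_deriv (a := -(π / 2)) (b := π / 2)
    (g := fun y => P (halfWidth α β y, y) - P (-halfWidth α β y, y))
    (fun θ _ => (hasDerivAt_sin θ).const_mul β) (by fun_prop) (by fun_prop)
  simp only [sin_neg, sin_pi_div_two, mul_neg, mul_one] at hcov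
  have hslice : ∀ y ∈ Icc (-β) β, -halfWidth α β y ≤ halfWidth α β y :=
    fun y _ => neg_le_self (by unfold halfWidth; positivity)
  rw [stadium_eq_swap_preimage_closedRegionBetween hα hβ,
    setIntegral_pdx_swap_closedRegionBetween (neg_le_self hβ) hw.fun_neg hw hslice hP, ← hcov]
  simp only [bdryInt, zero_mul, add_zero, intervalIntegral.integral_zero, zero_add,
    ← intervalIntegral.integral_const_mul]
  refine intervalIntegral.integral_congr_Ioo_of_le (neg_le_self (by positivity)) fun θ hθ => ?_
  simp only [Function.comp_apply, halfWidth_mul_sin hβ (cos_pos_of_mem_Ioo hθ).le]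
  ring

theorem setIntegral_pdy_stadium (hα : 0 ≤ α) (hβ : 0 ≤ β) (hQ : ContDiff ℝ 1 Q) :
    ∫ p in Stadium α β, pdy Q p = bdryInt α β (fun p n => n.2 * Q p) := by
  have hQc := hQ.continuous
  have hh := continuous_halfHeight (α := α) (β := β)
  have hslice : ∀ x ∈ Icc (-(α + β)) (α + β), -halfHeight α β x ≤ halfHeight α β x :=
    fun x _ => neg_le_self (Real.sqrt_nonneg _)
  rw [stadium_eq_closedRegionBetween hα hβ, setIntegral_pdy_closedRegionBetween
    (neg_le_self (by positivity)) hh.fun_neg hh hslice hQ, integral_stadium_base (by fun_prop),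
    bdryInt, integral_neg_self_eq_integral_add_comp_neg (a := π / 2) (by fun_prop),
    ← intervalIntegral.integral_const_mul]
  congr 1
  · refine intervalIntegral.integral_congr_Ioo_of_le (neg_le_self hα) fun x hx => ?_
    simp only [halfHeight_of_abs_le hβ (abs_le.2 (Ioo_subset_Icc_self hx))]
    ring
  · refine intervalIntegral.integral_congr_Ioo_of_le (by positivity) fun θ hθ => ?_
    have hcos : 0 ≤ cos θ := cos_nonneg_of_mem_Icc ⟨by linarith [hθ.1, pi_pos], hθ.2.le⟩
    have hsin : 0 ≤ sin θ := sin_nonneg_of_mem_Icc ⟨hθ.1.le, by linarith [hθ.2, pi_pos]⟩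
    simp only [halfHeight_neg, halfHeight_add_mul_cos hα hβ hcos hsin, cos_neg, sin_neg, mul_neg]
    ring

theorem setIntegral_divergence_stadium (hα : 0 ≤ α) (hβ : 0 ≤ β) (hP : ContDiff ℝ 1 P)
    (hQ : ContDiff ℝ 1 Q) :
    ∫ p in Stadium α β, (pdx P p + pdy Q p)
      = bdryInt α β (fun p n => n.1 * P p + n.2 * Q p) := by
  have hPc := hP.continuous
  have hQc := hQ.continuous
  have hPx : Continuous (pdx P) := (contDiff_pdx (m := 0) hP (by simp)).continuous
  have hQy : Continuous (pdy Q) := (contDiff_pdy (m := 0) hQ (by simp)).continuous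
  have hS := isCompact_stadium hα hβ
  rw [integral_add (hPx.continuousOn.integrableOn_compact hS)
      (hQy.continuousOn.integrableOn_compact hS), setIntegral_pdx_stadium hα hβ hP,
    setIntegral_pdy_stadium hα hβ hQ, ← bdryInt_add (by fun_prop) (by fun_prop)]

end DivergenceTheorem

section RellichIdentity

variable {α β μ : ℝ} {v : ℝ × ℝ → ℝ}

theorem setIntegral_sq_add_mul_pdx_stadium (hα : 0 ≤ α) (hβ : 0 ≤ β) (hv : ContDiff ℝ 1 v)
    (hv₀ : ∀ p ∈ StadiumBoundary α β, v p = 0) :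
    ∫ p in Stadium α β, (v p ^ 2 + 2 * p.1 * v p * pdx v p) = 0 := by
  have hpdx (p : ℝ × ℝ) :
      pdx (fun q => q.1 * v q ^ 2) p = v p ^ 2 + 2 * p.1 * v p * pdx v p := by
    have h := (hasDerivAt_id p.1).mul
      ((hasDerivAt_pdx (hv.differentiable one_ne_zero p)).pow 2)
    refine h.deriv.trans ?_
    simp only [Pi.pow_apply, id_eq]
    ring
  simp only [← hpdx]
  rw [setIntegral_pdx_stadium hα hβ (by fun_prop), bdryInt_congr hα (g' := fun _ _ => 0)]
  · simp [bdryInt]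
  · intro p n hpn
    rw [hv₀ p (hpn.mem_stadiumBoundary hα hβ)]
    ring

theorem setIntegral_sq_stadium_le (hα : 0 ≤ α) (hβ : 0 ≤ β) (hv : ContDiff ℝ 1 v)
    (hv₀ : ∀ p ∈ StadiumBoundary α β, v p = 0) :
    ∫ p in Stadium α β, v p ^ 2 ≤ 4 * (α + β) ^ 2 * ∫ p in Stadium α β, pdx v p ^ 2 := by
  have hS := isCompact_stadium hα hβ
  have hintOn {G : ℝ × ℝ → ℝ} (hG : Continuous G) : IntegrableOn G (Stadium α β) :=
    hG.continuousOn.integrableOn_compact hS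
  have hvc := hv.continuous
  have hvx : Continuous (pdx v) := (contDiff_pdx (m := 0) hv (by simp)).continuous
  calc ∫ p in Stadium α β, v p ^ 2
      ≤ ∫ p in Stadium α β, (2 * (v p ^ 2 + 2 * p.1 * v p * pdx v p)
          + 4 * (α + β) ^ 2 * pdx v p ^ 2) := by
        refine setIntegral_mono_on (hintOn (by fun_prop)) (hintOn (by fun_prop)) hS.measurableSet
          fun p hp => ?_
        have hsq : p.1 ^ 2 ≤ (α + β) ^ 2 := by
          rw [← sq_abs]
          gcongr
          exact abs_fst_le_of_mem_stadium hα hβ hp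
        nlinarith [sq_nonneg (v p + 2 * p.1 * pdx v p),
          mul_le_mul_of_nonneg_right hsq (sq_nonneg (pdx v p))]
    _ = 4 * (α + β) ^ 2 * ∫ p in Stadium α β, pdx v p ^ 2 := by
        rw [integral_add (hintOn (by fun_prop)) (hintOn (by fun_prop)), integral_const_mul,
          integral_const_mul, setIntegral_sq_add_mul_pdx_stadium hα hβ hv hv₀, mul_zero, zero_add]

/-- First component of the Rellich vector field, the field obtained on writing
`(2 x ∂ₓv + v) (Δ - μ) v` as `2 (∂ₓv)²` minus a divergence. -/
def rellichX (μ : ℝ) (v : ℝ × ℝ → ℝ) (p : ℝ × ℝ) : ℝ :=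
  p.1 * (pdx v p ^ 2 - pdy v p ^ 2 + μ * v p ^ 2) + v p * pdx v p

/-- Second component of the Rellich vector field, see `rellichX`. -/
def rellichY (v : ℝ × ℝ → ℝ) (p : ℝ × ℝ) : ℝ :=
  2 * p.1 * pdx v p * pdy v p + v p * pdy v p

theorem contDiff_rellichX (hv : ContDiff ℝ 2 v) : ContDiff ℝ 1 (rellichX μ v) := by
  have hv₁ : ContDiff ℝ 1 v := hv.of_le one_le_two
  have hx : ContDiff ℝ 1 (pdx v) := contDiff_pdx hv one_add_one_eq_two.le
  have hy : ContDiff ℝ 1 (pdy v) := contDiff_pdy hv one_add_one_eq_two.le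
  unfold rellichX
  fun_prop

theorem contDiff_rellichY (hv : ContDiff ℝ 2 v) : ContDiff ℝ 1 (rellichY v) := by
  have hv₁ : ContDiff ℝ 1 v := hv.of_le one_le_two
  have hx : ContDiff ℝ 1 (pdx v) := contDiff_pdx hv one_add_one_eq_two.le
  have hy : ContDiff ℝ 1 (pdy v) := contDiff_pdy hv one_add_one_eq_two.le
  unfold rellichY
  fun_prop

theorem pdx_rellichX (hv : ContDiff ℝ 2 v) (p : ℝ × ℝ) :
    pdx (rellichX μ v) p = 2 * pdx v p ^ 2 - pdy v p ^ 2 + μ * v p ^ 2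
      + 2 * p.1 * (pdx v p * pdx (pdx v) p - pdy v p * pdx (pdy v) p + μ * v p * pdx v p)
      + v p * pdx (pdx v) p := by
  have h := hasDerivAt_pdx (hv.differentiable two_ne_zero p)
  have hx := hasDerivAt_pdx
    ((contDiff_pdx (m := 1) hv one_add_one_eq_two.le).differentiable one_ne_zero p)
  have hy := hasDerivAt_pdx
    ((contDiff_pdy (m := 1) hv one_add_one_eq_two.le).differentiable one_ne_zero p)
  have hX := ((hasDerivAt_id p.1).mul
    (((hx.pow 2).sub (hy.pow 2)).add ((h.pow 2).const_mul μ))).add (h.mul hx)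
  refine hX.deriv.trans ?_
  simp only [Pi.add_apply, Pi.sub_apply, Pi.pow_apply, id_eq]
  ring

theorem pdy_rellichY (hv : ContDiff ℝ 2 v) (p : ℝ × ℝ) :
    pdy (rellichY v) p = 2 * p.1 * (pdy (pdx v) p * pdy v p + pdx v p * pdy (pdy v) p)
      + pdy v p ^ 2 + v p * pdy (pdy v) p := by
  have h := hasDerivAt_pdy (hv.differentiable two_ne_zero p)
  have hx := hasDerivAt_pdy
    ((contDiff_pdx (m := 1) hv one_add_one_eq_two.le).differentiable one_ne_zero p)
  have hy := hasDerivAt_pdy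
    ((contDiff_pdy (m := 1) hv one_add_one_eq_two.le).differentiable one_ne_zero p)
  refine (((hx.const_mul (2 * p.1)).mul hy).add (h.mul hy)).deriv.trans ?_
  ring

theorem divergence_rellich (hv : ContDiff ℝ 2 v) (p : ℝ × ℝ) :
    pdx (rellichX μ v) p + pdy (rellichY v) p
      = 2 * pdx v p ^ 2 - (2 * p.1 * pdx v p + v p) * (lap v p - μ * v p) := by
  rw [pdx_rellichX hv, pdy_rellichY hv, pdx_pdy_comm hv, lap]
  ring

theorem IsOutwardNormal.rellich_flux (hα : 0 ≤ α) (hβ : 0 < β) {p n : ℝ × ℝ}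
    (h : IsOutwardNormal α β p n) (hv : DifferentiableAt ℝ v p)
    (hv₀ : ∀ q ∈ StadiumBoundary α β, v q = 0) :
    n.1 * rellichX μ v p + n.2 * rellichY v p = p.1 * n.1 * nderiv v p n ^ 2 := by
  obtain ⟨hx, hy⟩ := h.gradient_eq_nderiv_mul hα hβ hv hv₀
  rw [rellichX, rellichY, hx, hy, hv₀ p (h.mem_stadiumBoundary hα hβ.le)]
  linear_combination p.1 * n.1 * nderiv v p n ^ 2 * h.sq_add_sq

theorem setIntegral_rellich_stadium (hα : 0 ≤ α) (hβ : 0 < β) (hv : ContDiff ℝ 2 v)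
    (hv₀ : ∀ p ∈ StadiumBoundary α β, v p = 0) :
    ∫ p in Stadium α β, (2 * pdx v p ^ 2 - (2 * p.1 * pdx v p + v p) * (lap v p - μ * v p))
      = bdryIntW α β (fun p n => p.1 * n.1 * nderiv v p n ^ 2) := by
  simp only [← divergence_rellich hv]
  rw [setIntegral_divergence_stadium hα hβ.le (contDiff_rellichX hv) (contDiff_rellichY hv),
    bdryInt_congr hα fun p n hpn =>
      hpn.rellich_flux hα hβ (hv.differentiable two_ne_zero p) hv₀,
    bdryInt_eq_add_bdryIntW]
  simp

theorem continuous_nderiv (hv : ContDiff ℝ 1 v) : Continuous (Function.uncurry (nderiv v)) := by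
  have hx : Continuous (pdx v) := (contDiff_pdx (m := 0) hv (by simp)).continuous
  have hy : Continuous (pdy v) := (contDiff_pdy (m := 0) hv (by simp)).continuous
  unfold nderiv
  fun_prop

theorem bdryIntW_rellich_flux_le (hα : 0 ≤ α) (hβ : 0 < β) (hv : ContDiff ℝ 1 v) :
    bdryIntW α β (fun p n => p.1 * n.1 * nderiv v p n ^ 2)
      ≤ (α + β) / β * bdryIntW α β (fun p n => (|p.1| - α) * nderiv v p n ^ 2) := by
  have hN := continuous_nderiv hv
  rw [← bdryIntW_const_mul]
  refine bdryIntW_mono hβ.le (by fun_prop) (by fun_prop) fun p n hpn => ?_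
  rw [← mul_assoc]
  exact mul_le_mul_of_nonneg_right (hpn.fst_mul_fst_le hα hβ) (sq_nonneg _)

-- Young's inequality, with weights for which the Poincaré inequality
-- `setIntegral_sq_stadium_le` lets both quadratic terms be absorbed by `2 (∂ₓv)²`.
theorem rellich_source_le {L x a g c : ℝ} (hL : 0 < L) (hx : |x| ≤ L) :
    (2 * x * a + c) * g ≤ a ^ 2 / 2 + c ^ 2 / (8 * L ^ 2) + 4 * L ^ 2 * g ^ 2 := by
  have hsq : x ^ 2 ≤ L ^ 2 := by
    rw [← sq_abs]
    gcongr
  have hgrad : 2 * x * a * g ≤ a ^ 2 / 2 + 2 * L ^ 2 * g ^ 2 := by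
    nlinarith [sq_nonneg (a - 2 * x * g), mul_le_mul_of_nonneg_right hsq (sq_nonneg g)]
  have hzeroth : c * g ≤ c ^ 2 / (8 * L ^ 2) + 2 * L ^ 2 * g ^ 2 := by
    have hsquare : c ^ 2 / (8 * L ^ 2) + 2 * L ^ 2 * g ^ 2 - c * g
        = (c - 4 * L ^ 2 * g) ^ 2 / (8 * L ^ 2) := by
      field_simp
      ring
    linarith [show 0 ≤ (c - 4 * L ^ 2 * g) ^ 2 / (8 * L ^ 2) by positivity]
  linarith

theorem setIntegral_pdx_sq_stadium_le (hα : 0 ≤ α) (hβ : 0 < β) (hv : ContDiff ℝ 2 v)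
    (hv₀ : ∀ p ∈ StadiumBoundary α β, v p = 0) :
    ∫ p in Stadium α β, pdx v p ^ 2
      ≤ (α + β) / β * bdryIntW α β (fun p n => (|p.1| - α) * nderiv v p n ^ 2)
        + 4 * (α + β) ^ 2 * ∫ p in Stadium α β, (lap v p - μ * v p) ^ 2 := by
  have hv₁ : ContDiff ℝ 1 v := hv.of_le one_le_two
  have hL : 0 < α + β := by positivity
  have hS := isCompact_stadium hα hβ.le
  have hintOn {G : ℝ × ℝ → ℝ} (hG : Continuous G) : IntegrableOn G (Stadium α β) :=
    hG.continuousOn.integrableOn_compact hS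
  have hvc := hv.continuous
  have hvx : Continuous (pdx v) := (contDiff_pdx (m := 0) hv₁ (by simp)).continuous
  have hlap := continuous_lap hv
  have hsource : ∫ p in Stadium α β, (2 * p.1 * pdx v p + v p) * (lap v p - μ * v p)
      ≤ ∫ p in Stadium α β, (pdx v p ^ 2 / 2 + v p ^ 2 / (8 * (α + β) ^ 2)
          + 4 * (α + β) ^ 2 * (lap v p - μ * v p) ^ 2) :=
    setIntegral_mono_on (hintOn (by fun_prop)) (hintOn (by fun_prop)) hS.measurableSet
      fun p hp => rellich_source_le hL (abs_fst_le_of_mem_stadium hα hβ.le hp)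
  rw [integral_add (hintOn (by fun_prop)) (hintOn (by fun_prop)),
    integral_add (hintOn (by fun_prop)) (hintOn (by fun_prop)), integral_div, integral_div,
    integral_const_mul] at hsource
  have hpoincare : (∫ p in Stadium α β, v p ^ 2) / (8 * (α + β) ^ 2)
      ≤ (∫ p in Stadium α β, pdx v p ^ 2) / 2 := by
    rw [div_le_iff₀ (by positivity)]
    linarith [setIntegral_sq_stadium_le hα hβ.le hv₁ hv₀]
  have hrellich := setIntegral_rellich_stadium (μ := μ) hα hβ hv hv₀
  rw [integral_sub (hintOn (by fun_prop)) (hintOn (by fun_prop)), integral_const_mul] at hrellich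
  linarith [bdryIntW_rellich_flux_le hα hβ hv₁]

theorem setIntegral_pdx_sq_stadium_le_of_contDiffOn {u : ℝ × ℝ → ℝ} {V : Set (ℝ × ℝ)}
    (hα : 0 ≤ α) (hβ : 0 < β) (hV : IsOpen V) (hSV : Stadium α β ⊆ V) (hu : ContDiffOn ℝ 2 u V)
    (hu₀ : ∀ p ∈ StadiumBoundary α β, u p = 0) :
    ∫ p in Stadium α β, pdx u p ^ 2
      ≤ (α + β) / β * bdryIntW α β (fun p n => (|p.1| - α) * nderiv u p n ^ 2)
        + 4 * (α + β) ^ 2 * ∫ p in Stadium α β, (lap u p - μ * u p) ^ 2 := by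
  have hS := isCompact_stadium hα hβ.le
  obtain ⟨v, hv, huv⟩ := exists_contDiff_eventuallyEq_nhdsSet (n := 2) hS.isClosed hV hSV hu
  have hbdry := stadiumBoundary_subset_stadium hα hβ.le
  have heq : EqOn u v (Stadium α β) := huv.self_of_nhdsSet
  have hx : EqOn (pdx u) (pdx v) (Stadium α β) := (pdx_eventuallyEq huv).self_of_nhdsSet
  have hy : EqOn (pdy u) (pdy v) (Stadium α β) := (pdy_eventuallyEq huv).self_of_nhdsSet
  have hlap : EqOn (lap u) (lap v) (Stadium α β) := (lap_eventuallyEq huv).self_of_nhdsSet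
  have hgradient : ∫ p in Stadium α β, pdx u p ^ 2 = ∫ p in Stadium α β, pdx v p ^ 2 :=
    setIntegral_congr_fun hS.measurableSet fun p hp => by simp only [hx hp]
  have hsource : ∫ p in Stadium α β, (lap u p - μ * u p) ^ 2
      = ∫ p in Stadium α β, (lap v p - μ * v p) ^ 2 :=
    setIntegral_congr_fun hS.measurableSet fun p hp => by simp only [hlap hp, heq hp]
  have hflux : bdryIntW α β (fun p n => (|p.1| - α) * nderiv u p n ^ 2)
      = bdryIntW α β (fun p n => (|p.1| - α) * nderiv v p n ^ 2) :=
    bdryIntW_congr fun p n hpn => by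
      have hp := hbdry ((IsOutwardNormal.wing hpn).mem_stadiumBoundary hα hβ.le)
      simp only [nderiv, hx hp, hy hp]
  rw [hgradient, hsource, hflux]
  exact setIntegral_pdx_sq_stadium_le hα hβ hv
    fun p hp => (heq (hbdry hp)).symm.trans (hu₀ p hp)

end RellichIdentity

theorem stmt11_general (α β : ℝ) (hα : 0 ≤ α) (hβ : 0 < β) :
    ∃ C > 0, ∀ (u : ℝ × ℝ → ℝ) (μ : ℝ) (f : ℝ × ℝ → ℝ),
      (∃ V : Set (ℝ × ℝ), IsOpen V ∧ Stadium α β ⊆ V ∧ ContDiffOn ℝ 2 u V) →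
      (∀ p ∈ StadiumBoundary α β, u p = 0) →
      (∀ p ∈ Stadium α β, lap u p - μ * u p = f p) →
      (∫ p in Stadium α β, (pdx u p) ^ 2) ≤
        C * bdryIntW α β (fun p n => (|p.1| - α) * (nderiv u p n) ^ 2) +
        C * (∫ p in Stadium α β, (f p) ^ 2) := by
  refine ⟨(α + β) / β + 4 * (α + β) ^ 2, by positivity, ?_⟩
  rintro u μ f ⟨V, hV, hSV, hu⟩ hu₀ hf
  have hsource : ∫ p in Stadium α β, (lap u p - μ * u p) ^ 2 = ∫ p in Stadium α β, f p ^ 2 :=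
    setIntegral_congr_fun (isCompact_stadium hα hβ.le).measurableSet
      fun p hp => by simp only [hf p hp]
  have hflux : 0 ≤ bdryIntW α β (fun p n => (|p.1| - α) * nderiv u p n ^ 2) :=
    bdryIntW_nonneg hβ.le fun p n hpn =>
      mul_nonneg (sub_nonneg.2 (hpn.le_abs_fst hα hβ.le)) (sq_nonneg _)
  have hmain := setIntegral_pdx_sq_stadium_le_of_contDiffOn (μ := μ) hα hβ hV hSV hu hu₀
  rw [hsource] at hmain
  refine hmain.trans (add_le_add ?_ ?_)
  · gcongr
    exact le_add_of_nonneg_right (by positivity)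
  · gcongr
    exact le_add_of_nonneg_left (by positivity)
/-- there is `C > 0` depending only on `α, β` such that every real Dirichlet
quasimode datum satisfies
`∫_S (∂_x u)² dA ≤ C ∫_{∂S ∩ W} w |∂_N u|² dl + C ‖f‖²_{L²(S)}`. -/
theorem stmt11 (α β : ℝ) (hα : 0 < α) (hβ : 0 < β) :
    ∃ C > 0, ∀ d : QMDatum α β,
      (∫ p in Stadium α β, (pdx d.u p) ^ 2) ≤
        C * bdryIntW α β (fun p n => (|p.1| - α) * (nderiv d.u p n) ^ 2) +
        C * (∫ p in Stadium α β, (d.f p) ^ 2) := by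
  obtain ⟨C, hC, h⟩ := stmt11_general α β hα.le hβ
  exact ⟨C, hC, fun d => h d.u (d.lam ^ 2) d.f
    (d.smooth.imp fun V hV => ⟨hV.1, hV.2.1, contDiffOn_infty.1 hV.2.2 2⟩) d.dirichlet d.eqn⟩
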